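/- The limit lim_{|z|→∞} z·(f_{a,b}(z) − 1) exists and equals c_1 = −(b_0 − a_0) + Σ_{i=1}^∞ (b_i − a_i); moreover c_1 equals minus the one-dimensional Lebesgue measure of 𝒞(a,b), i.e. the Lebesgue measure of 𝒞(a,b) is (b_0 − a_0) − Σ_{i=1}^∞ (b_i − a_i). -/

import Mathlib

open Filter Topology

/-- The Cantor-type set 𝒞(a,b) = [a₀,b₀] ∖ ⋃_{i≥1} (aᵢ,bᵢ), as a subset of ℝ. -/
noncomputable def cantorABReal (a b : ℕ → ℝ) : Set ℝ :=
  Set.Icc (a 0) (b 0) \ ⋃ i : ℕ, Set.Ioo (a (i + 1)) (b (i + 1))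

/-- The Cantor-type set 𝒞(a,b), viewed as a subset of ℂ. -/
noncomputable def cantorAB (a b : ℕ → ℝ) : Set ℂ :=
  (fun x : ℝ => (x : ℂ)) '' cantorABReal a b

/-- The partial product f^N(z) = ((z−b₀)/(z−a₀)) ∏_{i=1}^N (z−aᵢ)/(z−bᵢ). -/
noncomputable def partialProd (a b : ℕ → ℝ) (N : ℕ) (z : ℂ) : ℂ :=
  ((z - (b 0 : ℂ)) / (z - (a 0 : ℂ))) *
    ∏ i ∈ Finset.Icc 1 N, ((z - (a i : ℂ)) / (z - (b i : ℂ)))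

/-- Telescoping a product of factors `1 + w i`. -/
lemma prod_one_add_sub_one_eq_sum {R : Type*} [CommRing R] (w : ℕ → R) (N : ℕ) :
    ∏ i ∈ Finset.range N, (1 + w i) - 1 =
      ∑ i ∈ Finset.range N, w i * ∏ j ∈ Finset.range i, (1 + w j) := by
  induction N with
  | zero => simp
  | succ N ih =>
    rw [Finset.prod_range_succ, Finset.sum_range_succ, ← ih]
    ring

lemma norm_prod_one_add_le_exp_tsum {w : ℕ → ℂ} {u : ℕ → ℝ} (hu : Summable u)
    (hw : ∀ i, ‖w i‖ ≤ u i) (N : ℕ) :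
    ‖∏ i ∈ Finset.range N, (1 + w i)‖ ≤ Real.exp (∑' i, u i) := by
  rw [norm_prod]
  calc ∏ i ∈ Finset.range N, ‖1 + w i‖ ≤ ∏ i ∈ Finset.range N, Real.exp (u i) := by
        refine Finset.prod_le_prod (fun _ _ => norm_nonneg _) fun i _ => ?_
        have h₁ := norm_add_le 1 (w i)
        have h₂ := Real.add_one_le_exp (u i)
        have h₃ := hw i
        rw [norm_one] at h₁
        linarith
    _ = Real.exp (∑ i ∈ Finset.range N, u i) := (Real.exp_sum _ _).symm
    _ ≤ Real.exp (∑' i, u i) := Real.exp_le_exp.mpr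
        (hu.sum_le_tsum _ fun i _ => (norm_nonneg _).trans (hw i))

lemma tendsto_inv_sub_cobounded (p : ℂ) :
    Tendsto (fun z : ℂ => (z - p)⁻¹) (Bornology.cobounded ℂ) (𝓝 0) :=
  tendsto_inv₀_cobounded.comp (tendsto_sub_const_cobounded p)

/-- The first coefficient at infinity of a product `∏ (1 + c i / (z - p i))` with bounded poles
and absolutely summable coefficients is `∑ c i`. -/
lemma tendsto_mul_prod_sub_one_cobounded {c p : ℕ → ℂ} {M : ℝ} (hc : Summable fun i => ‖c i‖)
    (hp : ∀ i, ‖p i‖ ≤ M) {F : ℂ → ℂ}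
    (hF : ∀ᶠ z in Bornology.cobounded ℂ,
      Tendsto (fun N => ∏ i ∈ Finset.range N, (1 + c i / (z - p i))) atTop (𝓝 (F z))) :
    Tendsto (fun z => z * (F z - 1)) (Bornology.cobounded ℂ) (𝓝 (∑' i, c i)) := by
  have hM : 0 ≤ M := (norm_nonneg _).trans (hp 0)
  set w : ℂ → ℕ → ℂ := fun z i => c i / (z - p i)
  set T : ℂ → ℕ → ℂ := fun z i => z * (w z i * ∏ j ∈ Finset.range i, (1 + w z j))
  set B : ℕ → ℝ := fun i => 2 * ‖c i‖ * Real.exp (∑' j, ‖c j‖)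
  have hB : Summable B := (hc.mul_left 2).mul_right _
  have hlarge : ∀ᶠ z : ℂ in Bornology.cobounded ℂ, 2 * M + 2 ≤ ‖z‖ :=
    tendsto_norm_cobounded_atTop.eventually_ge_atTop _
  have hbound : ∀ᶠ z in Bornology.cobounded ℂ, ∀ i, ‖T z i‖ ≤ B i := by
    filter_upwards [hlarge] with z hz i
    have hden : ∀ j, ‖z‖ / 2 ≤ ‖z - p j‖ ∧ 1 ≤ ‖z - p j‖ := fun j => by
      have h₁ := norm_sub_norm_le z (p j)
      have h₂ := hp j
      constructor <;> linarith
    have hw : ∀ j, ‖w z j‖ ≤ ‖c j‖ := fun j => by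
      rw [norm_div]
      exact div_le_self (norm_nonneg _) (hden j).2
    have hzw : ‖z‖ * ‖w z i‖ ≤ 2 * ‖c i‖ := by
      rw [norm_div, ← mul_div_assoc, div_le_iff₀ (by linarith [(hden i).2])]
      nlinarith [(hden i).1, norm_nonneg (c i)]
    calc ‖T z i‖ = ‖z‖ * ‖w z i‖ * ‖∏ j ∈ Finset.range i, (1 + w z j)‖ := by
          simp only [T, norm_mul, mul_assoc]
      _ ≤ B i := mul_le_mul hzw (norm_prod_one_add_le_exp_tsum hc hw i) (norm_nonneg _)
          (by positivity)
  have hw_lim : ∀ i, Tendsto (fun z => w z i) (Bornology.cobounded ℂ) (𝓝 0) := fun i => by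
    simpa [w, div_eq_mul_inv] using (tendsto_inv_sub_cobounded (p i)).const_mul (c i)
  have hzw_lim : ∀ i, Tendsto (fun z => z * w z i) (Bornology.cobounded ℂ) (𝓝 (c i)) := fun i => by
    have h : Tendsto (fun z => c i + p i * w z i) (Bornology.cobounded ℂ) (𝓝 (c i)) := by
      simpa using ((hw_lim i).const_mul (p i)).const_add (c i)
    refine h.congr' ?_
    filter_upwards [hlarge] with z hz
    have hne : z - p i ≠ 0 := by
      intro h0
      have := hp i
      rw [← sub_eq_zero.mp h0] at this
      linarith
    simp only [w]
    field_simp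
    ring
  have hT_lim : ∀ i, Tendsto (fun z => T z i) (Bornology.cobounded ℂ) (𝓝 (c i)) := fun i => by
    have hprod : Tendsto (fun z => ∏ j ∈ Finset.range i, (1 + w z j)) (Bornology.cobounded ℂ)
        (𝓝 (∏ _j ∈ Finset.range i, (1 + 0))) :=
      tendsto_finsetProd _ fun j _ => (hw_lim j).const_add 1
    simpa [T, mul_assoc] using (hzw_lim i).mul hprod
  refine (tendsto_tsum_of_dominated_convergence hB hT_lim hbound).congr' ?_
  filter_upwards [hbound, hF] with z hz hFz
  have hsum : Summable (T z) := hB.of_norm_bounded hz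
  refine tendsto_nhds_unique hsum.hasSum.tendsto_sum_nat ?_
  refine ((hFz.sub_const 1).const_mul z).congr fun N => ?_
  rw [prod_one_add_sub_one_eq_sum, Finset.mul_sum]

lemma summable_and_volume_iUnion_Ioo {a b : ℕ → ℝ} {x y : ℝ} (hab : ∀ i, a i ≤ b i)
    (hsub : ∀ i, Set.Ioo (a i) (b i) ⊆ Set.Icc x y)
    (hdisj : Pairwise fun i k => Disjoint (Set.Ioo (a i) (b i)) (Set.Ioo (a k) (b k))) :
    Summable (fun i => b i - a i) ∧
      MeasureTheory.volume (⋃ i, Set.Ioo (a i) (b i)) = ENNReal.ofReal (∑' i, (b i - a i)) := by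
  have hvol : MeasureTheory.volume (⋃ i, Set.Ioo (a i) (b i)) =
      ∑' i, ENNReal.ofReal (b i - a i) := by
    rw [MeasureTheory.measure_iUnion hdisj fun _ => measurableSet_Ioo]
    simp only [Real.volume_Ioo]
  have hfin : ∑' i, ENNReal.ofReal (b i - a i) ≠ ⊤ := by
    rw [← hvol]
    exact ((MeasureTheory.measure_mono (Set.iUnion_subset hsub)).trans_lt
      (by simp [Real.volume_Icc])).ne
  have hs : Summable (fun i => b i - a i) := by
    refine (ENNReal.summable_toReal hfin).congr fun i => ?_
    exact ENNReal.toReal_ofReal (sub_nonneg.mpr (hab i))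
  exact ⟨hs, by rw [hvol, ENNReal.ofReal_tsum_of_nonneg (fun i => sub_nonneg.mpr (hab i)) hs]⟩

/-- The partial products written with factors `1 + c i / (z - p i)`, away from the poles. -/
lemma partialProd_eq_prod_range (a b : ℕ → ℝ) (N : ℕ) {z : ℂ} (ha : z ≠ a 0)
    (hb : ∀ i, z ≠ b i) :
    partialProd a b N z = ∏ i ∈ Finset.range (N + 1),
      (1 + (if i = 0 then ((a 0 - b 0 : ℝ) : ℂ) else ((b i - a i : ℝ) : ℂ)) /
        (z - if i = 0 then (a 0 : ℂ) else (b i : ℂ))) := by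
  have ha' := sub_ne_zero.mpr ha
  rw [partialProd, Finset.prod_range_succ', mul_comm, ← Finset.Ico_add_one_right_eq_Icc,
    Finset.prod_Ico_eq_prod_range]
  congr 1
  · refine Finset.prod_congr (by simp) fun i _ => ?_
    have hb' := sub_ne_zero.mpr (hb (1 + i))
    rw [add_comm 1 i] at hb' ⊢
    simp only [Nat.add_eq_zero_iff, one_ne_zero, and_false, if_false]
    field_simp
    push_cast
    ring
  · simp only [if_true]
    field_simp
    push_cast
    ring

/-- lim_{|z|→∞} z·(f_{a,b}(z) − 1) exists and equals
c₁ = −(b₀−a₀) + Σ_{i≥1}(bᵢ−aᵢ); moreover c₁ = −(Lebesgue measure of 𝒞(a,b)), i.e.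
the Lebesgue measure of 𝒞(a,b) equals (b₀−a₀) − Σ_{i≥1}(bᵢ−aᵢ). -/
theorem stmt2 (a b : ℕ → ℝ)
    (hab : ∀ j, a j < b j)
    (hsub : ∀ i, 1 ≤ i → Set.Icc (a i) (b i) ⊆ Set.Ioo (a 0) (b 0))
    (hdisj : ∀ i k, 1 ≤ i → 1 ≤ k → i ≠ k →
      Disjoint (Set.Icc (a i) (b i)) (Set.Icc (a k) (b k)))
    (f : ℂ → ℂ)
    (hf : ∀ z ∉ cantorAB a b,
      Tendsto (fun N => partialProd a b N z) atTop (𝓝 (f z)))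
    (hfdiff : DifferentiableOn ℂ f (cantorAB a b)ᶜ) :
    Tendsto (fun z : ℂ => z * (f z - 1)) (Bornology.cobounded ℂ)
      (𝓝 ((-(b 0 - a 0) + ∑' i : ℕ, (b (i + 1) - a (i + 1)) : ℝ) : ℂ)) ∧
    MeasureTheory.volume (cantorABReal a b) =
      ENNReal.ofReal ((b 0 - a 0) - ∑' i : ℕ, (b (i + 1) - a (i + 1))) := by
  have hmem : ∀ i, a i ∈ Set.Icc (a 0) (b 0) ∧ b i ∈ Set.Icc (a 0) (b 0) := by
    intro i
    rcases Nat.eq_zero_or_pos i with rfl | hi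
    · exact ⟨Set.left_mem_Icc.mpr (hab 0).le, Set.right_mem_Icc.mpr (hab 0).le⟩
    · exact ⟨Set.Ioo_subset_Icc_self (hsub i hi (Set.left_mem_Icc.mpr (hab i).le)),
        Set.Ioo_subset_Icc_self (hsub i hi (Set.right_mem_Icc.mpr (hab i).le))⟩
  have hgap : ∀ i, Set.Ioo (a (i + 1)) (b (i + 1)) ⊆ Set.Icc (a 0) (b 0) := fun i =>
    Set.Ioo_subset_Icc_self.trans ((hsub (i + 1) (by lia)).trans Set.Ioo_subset_Icc_self)
  obtain ⟨hsum, hvol⟩ := summable_and_volume_iUnion_Ioo (fun i => (hab (i + 1)).le) hgap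
    fun i k hik => (hdisj (i + 1) (k + 1) (by lia) (by lia) (by lia)).mono
      Set.Ioo_subset_Icc_self Set.Ioo_subset_Icc_self
  constructor
  · set c : ℕ → ℂ := fun i => if i = 0 then ((a 0 - b 0 : ℝ) : ℂ) else ((b i - a i : ℝ) : ℂ)
    set p : ℕ → ℂ := fun i => if i = 0 then (a 0 : ℂ) else (b i : ℂ)
    set M : ℝ := max |a 0| |b 0|
    have hnorm : ∀ x ∈ Set.Icc (a 0) (b 0), ‖(x : ℂ)‖ ≤ M := fun x hx => by
      rw [Complex.norm_real, Real.norm_eq_abs]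
      exact abs_le_max_abs_abs hx.1 hx.2
    have hc : Summable fun i => ‖c i‖ := by
      rw [← summable_nat_add_iff 1]
      refine hsum.congr fun i => ?_
      simp only [c, Nat.add_eq_zero_iff, one_ne_zero, and_false, if_false, Complex.norm_real]
      exact (Real.norm_of_nonneg (sub_nonneg.mpr (hab (i + 1)).le)).symm
    have hp : ∀ i, ‖p i‖ ≤ M := fun i => by
      simp only [p]
      split_ifs
      · exact hnorm _ (hmem 0).1
      · exact hnorm _ (hmem i).2
    have hF : ∀ᶠ z in Bornology.cobounded ℂ,
        Tendsto (fun N => ∏ i ∈ Finset.range N, (1 + c i / (z - p i))) atTop (𝓝 (f z)) := by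
      filter_upwards [tendsto_norm_cobounded_atTop.eventually_gt_atTop M] with z hz
      have hne : ∀ x ∈ Set.Icc (a 0) (b 0), z ≠ x := by
        rintro x hx rfl
        exact (hnorm x hx).not_gt hz
      have hzC : z ∉ cantorAB a b := by
        rintro ⟨x, hx, rfl⟩
        exact hne x hx.1 rfl
      rw [← tendsto_add_atTop_iff_nat 1]
      exact (hf z hzC).congr fun N =>
        partialProd_eq_prod_range a b N (hne _ (hmem 0).1) fun i => hne _ (hmem i).2
    convert tendsto_mul_prod_sub_one_cobounded hc hp hF using 2
    rw [hc.of_norm.tsum_eq_zero_add]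
    simp [c, Complex.ofReal_tsum]
  · have hm : MeasurableSet (⋃ i : ℕ, Set.Ioo (a (i + 1)) (b (i + 1))) :=
      MeasurableSet.iUnion fun _ => measurableSet_Ioo
    rw [cantorABReal, MeasureTheory.measure_sdiff (Set.iUnion_subset hgap) hm.nullMeasurableSet
      (by rw [hvol]; exact ENNReal.ofReal_ne_top), hvol, Real.volume_Icc,
      ENNReal.ofReal_sub _ (tsum_nonneg fun i => sub_nonneg.mpr (hab (i + 1)).le)]
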